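/- Let f : {0,…,n} → ℤ and g : {0,…,m} → ℤ take values in {−U,…,U} for some integer U ≥ 0, let W > 2U be an integer, and let N > max(n, m). Extend f to f' : {0,…,N−1} → ℤ by f'(n + j) = 2jW for 1 ≤ j ≤ N−1−n, and extend g to g' : {0,…,N−1} → ℤ by g'(m + j) = 2jW for 1 ≤ j ≤ N−1−m. Then for every k ∈ {0,…,n+m}, the min-plus convolution of f' and g' at k equals the min-plus convolution of f and g at k. -/

import Mathlib

/-!
Let `i + j = k ≤ n + m` and suppose `f' i + g' j` is not already a sum of unpadded values. Since
`i > n` and `j > m` cannot both hold, exactly one of the two summands is padded. It is at least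
`2 * W > 4 * U` and the other one is at least `-U`, so their sum exceeds `2 * U`, which bounds every
sum of unpadded values from above.
-/

theorem isLeast_iff_of_isCoinitialFor_of_subset {α : Type*} [PartialOrder α] {s t : Set α} {a : α}
    (hts : IsCoinitialFor t s) (hst : s ⊆ t) : IsLeast t a ↔ IsLeast s a := by
  constructor
  · rintro ⟨hat, hta⟩
    obtain ⟨b, hbs, hba⟩ := hts hat
    obtain rfl : b = a := hba.antisymm (hta (hst hbs))
    exact ⟨hbs, lowerBounds_mono_set hst hta⟩
  · rintro ⟨has, hsa⟩
    refine ⟨hst has, fun x hxt => ?_⟩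
    obtain ⟨y, hys, hyx⟩ := hts hxt
    exact (hsa hys).trans hyx

/-- The sums `f i + g j` with `i ≤ n`, `j ≤ m` and `i + j = k`, whose least element is the value at
`k` of the min-plus convolution of `f` on `{0,…,n}` and `g` on `{0,…,m}`. The functions are total
on `ℕ`, and their values beyond `n` and `m` are ignored. -/
def minPlusSums {α : Type*} [Add α] (n m : ℕ) (f g : ℕ → α) (k : ℕ) : Set α :=
  {v | ∃ i ≤ n, ∃ j ≤ m, i + j = k ∧ v = f i + g j}

section MinPlusSums

variable {α : Type*} [Add α] {n m n' m' k : ℕ} {f g f' g' : ℕ → α} {a b c d : α}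

theorem minPlusSums_nonempty (hk : k ≤ n + m) : (minPlusSums n m f g k).Nonempty :=
  ⟨f (min n k) + g (k - min n k), min n k, by omega, k - min n k, by omega, by omega, rfl⟩

theorem minPlusSums_subset (hn : n ≤ n') (hm : m ≤ m') (hf : ∀ i ≤ n, f' i = f i)
    (hg : ∀ j ≤ m, g' j = g j) : minPlusSums n m f g k ⊆ minPlusSums n' m' f' g' k := by
  rintro v ⟨i, hi, j, hj, hij, rfl⟩
  exact ⟨i, hi.trans hn, j, hj.trans hm, hij, by rw [hf i hi, hg j hj]⟩

theorem le_of_mem_minPlusSums [Preorder α] [AddLeftMono α] [AddRightMono α]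
    (hf : ∀ i ≤ n, f i ≤ b) (hg : ∀ j ≤ m, g j ≤ d) {v : α} (hv : v ∈ minPlusSums n m f g k) :
    v ≤ b + d := by
  obtain ⟨i, hi, j, hj, -, rfl⟩ := hv
  exact add_le_add (hf i hi) (hg j hj)

theorem mem_minPlusSums_or_le_of_padding [Preorder α] [AddLeftMono α] [AddRightMono α]
    (hk : k ≤ n + m) (hf : ∀ i ≤ n, a ≤ f i) (hg : ∀ j ≤ m, c ≤ g j)
    (hf'eq : ∀ i ≤ n, f' i = f i) (hf'pad : ∀ i ∈ Set.Ioc n n', b ≤ f' i + c)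
    (hg'eq : ∀ j ≤ m, g' j = g j) (hg'pad : ∀ j ∈ Set.Ioc m m', b ≤ a + g' j)
    {v : α} (hv : v ∈ minPlusSums n' m' f' g' k) : v ∈ minPlusSums n m f g k ∨ b ≤ v := by
  obtain ⟨i, hi, j, hj, hij, rfl⟩ := hv
  rcases lt_or_ge n i with hni | hin
  · have hjm : j ≤ m := by omega
    right
    calc b ≤ f' i + c := hf'pad i ⟨hni, hi⟩
      _ ≤ f' i + g' j := by gcongr; exact (hg j hjm).trans_eq (hg'eq j hjm).symm
  · rcases lt_or_ge m j with hmj | hjm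
    · right
      calc b ≤ a + g' j := hg'pad j ⟨hmj, hj⟩
        _ ≤ f' i + g' j := by gcongr; exact (hf i hin).trans_eq (hf'eq i hin).symm
    · left
      exact ⟨i, hin, j, hjm, hij, by rw [hf'eq i hin, hg'eq j hjm]⟩

theorem minPlusConv_padding_general [PartialOrder α] [AddLeftMono α] [AddRightMono α]
    (hn : n ≤ n') (hm : m ≤ m') (hk : k ≤ n + m)
    (hf : ∀ i ≤ n, a ≤ f i ∧ f i ≤ b) (hg : ∀ j ≤ m, c ≤ g j ∧ g j ≤ d)
    (hf'eq : ∀ i ≤ n, f' i = f i) (hf'pad : ∀ i ∈ Set.Ioc n n', b + d ≤ f' i + c)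
    (hg'eq : ∀ j ≤ m, g' j = g j) (hg'pad : ∀ j ∈ Set.Ioc m m', b + d ≤ a + g' j) {v : α} :
    IsLeast (minPlusSums n' m' f' g' k) v ↔ IsLeast (minPlusSums n m f g k) v := by
  refine isLeast_iff_of_isCoinitialFor_of_subset (fun x hx => ?_)
    (minPlusSums_subset hn hm hf'eq hg'eq)
  rcases mem_minPlusSums_or_le_of_padding hk (fun i hi => (hf i hi).1) (fun j hj => (hg j hj).1)
    hf'eq hf'pad hg'eq hg'pad hx with hx | hx
  · exact ⟨x, hx, le_rfl⟩
  · obtain ⟨y, hy⟩ := minPlusSums_nonempty (f := f) (g := g) hk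
    exact ⟨y, hy, (le_of_mem_minPlusSums (fun i hi => (hf i hi).2) (fun j hj => (hg j hj).2)
      hy).trans hx⟩

end MinPlusSums

theorem two_mul_le_of_linear_padding {R : Type*} [Semiring R] [PartialOrder R] [IsOrderedRing R]
    {n l : ℕ} {W : R} {p : ℕ → R} (hW : 0 ≤ W)
    (hp : ∀ j : ℕ, 1 ≤ j → n + j ≤ l → p (n + j) = 2 * (j : R) * W) :
    ∀ i ∈ Set.Ioc n l, 2 * W ≤ p i := by
  rintro i ⟨hni, hil⟩
  obtain ⟨j, rfl⟩ := Nat.exists_eq_add_of_le hni.le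
  have hj : 1 ≤ j := by omega
  calc 2 * W = 2 * ((1 : ℕ) : R) * W := by simp
    _ ≤ 2 * (j : R) * W := by gcongr; exact zero_le_two
    _ = p (n + j) := (hp j hj hil).symm

/-- Padding the input functions with sufficiently steep values does not
change the min-plus convolution on `{0,…,n+m}`. -/
theorem minPlusConv_padding (n m N : ℕ) (U W : ℤ) (hU : 0 ≤ U) (hW : 2 * U < W)
    (hN : max n m < N)
    (f g f' g' h h' : ℕ → ℤ)
    (hfU : ∀ i ≤ n, -U ≤ f i ∧ f i ≤ U) (hgU : ∀ j ≤ m, -U ≤ g j ∧ g j ≤ U)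
    (hf'eq : ∀ i ≤ n, f' i = f i)
    (hf'pad : ∀ j : ℕ, 1 ≤ j → n + j ≤ N - 1 → f' (n + j) = 2 * (j : ℤ) * W)
    (hg'eq : ∀ j ≤ m, g' j = g j)
    (hg'pad : ∀ j : ℕ, 1 ≤ j → m + j ≤ N - 1 → g' (m + j) = 2 * (j : ℤ) * W)
    (hh : ∀ k ≤ n + m,
      IsLeast {v : ℤ | ∃ i ≤ n, ∃ j ≤ m, i + j = k ∧ v = f i + g j} (h k))
    (hh' : ∀ k ≤ (N - 1) + (N - 1),
      IsLeast {v : ℤ | ∃ i ≤ N - 1, ∃ j ≤ N - 1, i + j = k ∧ v = f' i + g' j} (h' k)) :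
    ∀ k ≤ n + m, h' k = h k := by
  intro k hk
  have hW0 : 0 ≤ W := by linarith
  have hf'large : ∀ i ∈ Set.Ioc n (N - 1), U + U ≤ f' i + -U := fun i hi => by
    linarith [two_mul_le_of_linear_padding hW0 hf'pad i hi]
  have hg'large : ∀ j ∈ Set.Ioc m (N - 1), U + U ≤ -U + g' j := fun j hj => by
    linarith [two_mul_le_of_linear_padding hW0 hg'pad j hj]
  have hh'k : IsLeast (minPlusSums n m f g k) (h' k) :=
    (minPlusConv_padding_general (by omega) (by omega) hk hfU hgU hf'eq hf'large hg'eq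
      hg'large).1 (hh' k (by omega))
  exact hh'k.unique (hh k hk)
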